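/- Let (G, G⁺, Δ) be a support-preserving LCM-Garside structure satisfying homogeneity and square-freeness, and such that for every saturated X ⊆ 𝒜 some positive power of Δ_X is central in G_X. Let B₁ and B₂ be parabolic subgroups of G. Then for every c ∈ G, c⁻¹B₁c = B₂ if and only if c⁻¹ z_{B₁} c = z_{B₂}. -/

import Mathlib

open scoped Pointwise Classical

/-- A Garside structure on a group `G`: a submonoid `pos` of positive elements with
trivial units, prefix and suffix lattice operations, and a Garside element `delta`. -/
structure GarsideStructure (G : Type*) [Group G] where
  /-- the submonoid of positive elements -/
  pos : Submonoid G
  /-- the Garside element Δ -/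
  delta : G
  /-- meet for the prefix order -/
  meet : G → G → G
  /-- join for the prefix order -/
  join : G → G → G
  /-- meet for the suffix order -/
  rmeet : G → G → G
  /-- join for the suffix order -/
  rjoin : G → G → G
  units_triv : ∀ a : G, a ∈ pos → a⁻¹ ∈ pos → a = 1
  meet_le_left : ∀ a b : G, (meet a b)⁻¹ * a ∈ pos
  meet_le_right : ∀ a b : G, (meet a b)⁻¹ * b ∈ pos
  le_meet : ∀ a b c : G, c⁻¹ * a ∈ pos → c⁻¹ * b ∈ pos → c⁻¹ * meet a b ∈ pos
  le_join_left : ∀ a b : G, a⁻¹ * join a b ∈ pos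
  le_join_right : ∀ a b : G, b⁻¹ * join a b ∈ pos
  join_le : ∀ a b c : G, a⁻¹ * c ∈ pos → b⁻¹ * c ∈ pos → (join a b)⁻¹ * c ∈ pos
  rmeet_le_left : ∀ a b : G, a * (rmeet a b)⁻¹ ∈ pos
  rmeet_le_right : ∀ a b : G, b * (rmeet a b)⁻¹ ∈ pos
  le_rmeet : ∀ a b c : G, a * c⁻¹ ∈ pos → b * c⁻¹ ∈ pos → rmeet a b * c⁻¹ ∈ pos
  rjoin_le_left : ∀ a b : G, rjoin a b * a⁻¹ ∈ pos
  rjoin_le_right : ∀ a b : G, rjoin a b * b⁻¹ ∈ pos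
  rjoin_le : ∀ a b c : G, c * a⁻¹ ∈ pos → c * b⁻¹ ∈ pos → c * (rjoin a b)⁻¹ ∈ pos
  delta_pos : delta ∈ pos
  /-- Δ is balanced: its positive prefixes coincide with its positive suffixes -/
  delta_balanced : ∀ s : G, s ∈ pos → (s⁻¹ * delta ∈ pos ↔ delta * s⁻¹ ∈ pos)
  /-- the set of simple elements (divisors of Δ) is finite -/
  divDelta_finite : {s : G | s ∈ pos ∧ s⁻¹ * delta ∈ pos}.Finite
  /-- the simple elements generate `G` -/
  divDelta_generates : Subgroup.closure {s : G | s ∈ pos ∧ s⁻¹ * delta ∈ pos} = ⊤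
  /-- the atoms generate the positive monoid -/
  atoms_generate :
    Submonoid.closure {a : G | a ∈ pos ∧ a ≠ 1 ∧
      ∀ b ∈ pos, b⁻¹ * a ∈ pos → b = 1 ∨ b = a} = pos
  /-- every atom divides Δ -/
  atoms_divide_delta : ∀ a : G, a ∈ pos → a ≠ 1 →
    (∀ b ∈ pos, b⁻¹ * a ∈ pos → b = 1 ∨ b = a) → a⁻¹ * delta ∈ pos
  /-- every element is bounded below and above by powers of Δ -/
  delta_bounds : ∀ x : G, ∃ p q : ℤ, p ≤ q ∧ (delta ^ p)⁻¹ * x ∈ pos ∧ x⁻¹ * delta ^ q ∈ pos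
  /-- conjugation by Δ maps the positive monoid bijectively onto itself -/
  conj_delta : ∀ a : G, a ∈ pos ↔ delta * a * delta⁻¹ ∈ pos
  /-- some positive power of Δ is central -/
  central_power : ∃ n : ℕ, 0 < n ∧ delta ^ n ∈ Subgroup.center G
  /-- no infinite strictly decreasing (for the prefix order) sequence of positive elements -/
  no_infinite_descent : ¬ ∃ f : ℕ → G, (∀ n, f n ∈ pos) ∧
    ∀ n, (f (n + 1))⁻¹ * f n ∈ pos ∧ f (n + 1) ≠ f n

namespace GarsideStructure

variable {G : Type*} [Group G] (S : GarsideStructure G)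

/-- the prefix order: `a ≼ b` iff `a⁻¹ * b` is positive -/
def le (a b : G) : Prop := a⁻¹ * b ∈ S.pos

/-- the set of positive prefixes of an element -/
def Div (d : G) : Set G := {s : G | s ∈ S.pos ∧ S.le s d}

/-- atoms: nontrivial positive elements with no nontrivial proper positive prefix -/
def IsAtomic (a : G) : Prop :=
  a ∈ S.pos ∧ a ≠ 1 ∧ ∀ b ∈ S.pos, S.le b a → b = 1 ∨ b = a

/-- the set of atoms -/
def atoms : Set G := {a : G | S.IsAtomic a}

/-- the left denominator of `x`: `D_L x = (1 ∧ x)⁻¹` -/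
def DL (x : G) : G := (S.meet 1 x)⁻¹

/-- the left numerator of `x`: `N_L x = D_L x * x` -/
def NL (x : G) : G := S.DL x * x

/-- the (left) swap `φ(x) = N_L x * (D_L x)⁻¹ = D_L x * x * (D_L x)⁻¹` -/
def swap (x : G) : G := S.DL x * x * (S.DL x)⁻¹

/-- an element is recurrent if it is fixed by some positive iterate of the swap map -/
def Recurrent (x : G) : Prop := ∃ m : ℕ, 0 < m ∧ S.swap^[m] x = x

/-- the set `R(x)` of recurrent conjugates of `x` -/
def Rset (x : G) : Set G := {y : G | IsConj x y ∧ S.Recurrent y}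

/-- the set `C⁺(x)` of positive conjugates of `x` -/
def Cpos (x : G) : Set G := {y : G | IsConj x y ∧ y ∈ S.pos}

/-- the set `C⁻(x)` of negative conjugates of `x` -/
def Cneg (x : G) : Set G := {y : G | IsConj x y ∧ y⁻¹ ∈ S.pos}

/-- the transport of `u` at `y`: with `y = a⁻¹ b` reduced, `u^{(1)} = (a u) ∧ (b u)` -/
def transport (y u : G) : G := S.meet (S.DL y * u) (S.NL y * u)

/-- `Δ_X`: the least upper bound for the prefix order of a set `X` (`1` if there is none) -/
noncomputable def deltaOf (X : Set G) : G :=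
  if h : ∃ d : G, (∀ x ∈ X, S.le x d) ∧ ∀ c : G, (∀ x ∈ X, S.le x c) → S.le d c
  then h.choose else 1

/-- the closure `X̄ = Div(Δ_X) ∩ 𝒜` of a set of atoms -/
noncomputable def closureOf (X : Set G) : Set G := S.Div (S.deltaOf X) ∩ S.atoms

/-- the subgroup `G_X` generated by the closure of `X` -/
noncomputable def GX (X : Set G) : Subgroup G := Subgroup.closure (S.closureOf X)

/-- the support of an element: the closure of the set of atoms appearing in atom
factorizations of its left denominator and left numerator -/
noncomputable def supp (x : G) : Set G :=
  if h : ∃ p : List G × List G,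
      (∀ a ∈ p.1, a ∈ S.atoms) ∧ (∀ a ∈ p.2, a ∈ S.atoms) ∧
      p.1.prod = S.DL x ∧ p.2.prod = S.NL x
  then S.closureOf ({a : G | a ∈ h.choose.1} ∪ {a : G | a ∈ h.choose.2})
  else ∅

/-- an LCM-Garside structure -/
structure IsLCM : Prop where
  delta_eq : S.delta = S.deltaOf S.atoms
  balanced : ∀ X ⊆ S.atoms, ∀ s ∈ S.pos,
    (S.le s (S.deltaOf X) ↔ S.deltaOf X * s⁻¹ ∈ S.pos)
  div_eq : ∀ X ⊆ S.atoms,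
    S.Div (S.deltaOf X) = S.Div S.delta ∩ {g : G | g ∈ S.GX X ∧ g ∈ S.pos}
  factor_closed : ∀ X ⊆ S.atoms, ∀ g : G, g ∈ S.GX X → g ∈ S.pos →
    ∀ a b : G, a ∈ S.pos → b ∈ S.pos → g = a * b → a ∈ S.GX X ∧ b ∈ S.GX X
  lattice_closed : ∀ X ⊆ S.atoms, ∀ a b : G, a ∈ S.GX X → b ∈ S.GX X →
    S.meet a b ∈ S.GX X ∧ S.join a b ∈ S.GX X
  fraction_closed : ∀ X ⊆ S.atoms, ∀ g : G, g ∈ S.GX X →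
    S.DL g ∈ S.GX X ∧ S.NL g ∈ S.GX X

/-- a standard parabolic subgroup: the subgroup generated by a saturated set of atoms -/
noncomputable def IsStandardParabolic (H : Subgroup G) : Prop :=
  ∃ X : Set G, X ⊆ S.atoms ∧ S.closureOf X = X ∧ H = S.GX X

/-- a parabolic subgroup: a conjugate of a standard parabolic subgroup -/
noncomputable def IsParabolic (H : Subgroup G) : Prop :=
  ∃ (P : Subgroup G) (c : G), S.IsStandardParabolic P ∧
    H = Subgroup.map (MulAut.conj c).toMonoidHom P

/-- the structure is support-preserving if conjugations between positive elements
conjugate the corresponding parabolic subgroups of the supports -/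
noncomputable def SupportPreserving : Prop :=
  ∀ y ∈ S.pos, ∀ z ∈ S.pos, ∀ α : G, α⁻¹ * y * α = z →
    Subgroup.map (MulAut.conj α⁻¹).toMonoidHom (S.GX (S.supp y)) = S.GX (S.supp z)

/-- `P` is the parabolic closure of `x` -/
noncomputable def IsParabolicClosure (x : G) (P : Subgroup G) : Prop :=
  S.IsParabolic P ∧ x ∈ P ∧ ∀ H : Subgroup G, S.IsParabolic H → x ∈ H → P ≤ H

end GarsideStructure


/-- `z` is the canonical central element of the parabolic subgroup `B`: for some
saturated set of atoms `X` and some `c` conjugating `G_X` to `B`, `z` is the conjugate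
by `c` of the smallest positive power of `Δ_X` which is central in `G_X`. -/
noncomputable def GarsideStructure.IsZof {G : Type*} [Group G]
    (S : GarsideStructure G) (B : Subgroup G) (z : G) : Prop :=
  ∃ X : Set G, X ⊆ S.atoms ∧ S.closureOf X = X ∧
    ∃ c : G, B = Subgroup.map (MulAut.conj c).toMonoidHom (S.GX X) ∧
      ∃ e : ℕ, 0 < e ∧ (∀ g ∈ S.GX X, Commute g (S.deltaOf X ^ e)) ∧
        (∀ e' : ℕ, 0 < e' → (∀ g ∈ S.GX X, Commute g (S.deltaOf X ^ e')) → e ≤ e') ∧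
        z = c * S.deltaOf X ^ e * c⁻¹

/-!
Conjugating a power of `Δ_X` to a power of `Δ_Y` conjugates `G_X` to `G_Y` by preservation of
supports, since a positive power of `Δ_X` has support `X`.

Conversely, let `α` conjugate `G_X` to `G_Y`, and let `z` be a power of `Δ_X` which is central
in `G_X`. Multiplying by a central power of `Δ`, one may take `α` positive. Moreover `y = α⁻¹zα` is
positive: for `w = y⁻¹ ∨ 1`, centrality of `y` in `G_Y` makes all powers of `w` prefixes of a single
element, which has finitely many prefixes, so `w = 1`. Thus `α ≼ zα`, and `α` is a product of
elementary conjugators of standard parabolic subgroups, each carrying `Δ_X` or its power `z` along: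
atoms of `X`, and the elements `Δ_X⁻¹Δ_W` with `W = X ∪ {a}` for an atom `a ∉ X`. Indeed, if no
atom of `X` is a prefix of `α`, then some atom `a ∉ X` is a prefix of `zα`. As `Δ_X b` is not
simple for `b ∈ X`, the powers of `Δ_X` can be peeled off until an atom outside `X` is a prefix of
`Δ_X α`, which yields `Δ_W ≼ Δ_X α`.
-/

theorem smul_mem_centralizer_smul_iff {G : Type*} [Group G] (φ : MulAut G) {H : Subgroup G}
    {z : G} :
    φ • z ∈ Subgroup.centralizer (φ • H : Subgroup G) ↔ z ∈ Subgroup.centralizer H := by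
  simp only [Subgroup.mem_centralizer_iff, Subgroup.coe_pointwise_smul, ← Set.image_smul,
    Set.forall_mem_image, ← smul_mul', smul_left_cancel_iff]

theorem inv_smul_smul_eq_smul_iff {M α : Type*} [Group M] [MulAction M α] (p q r : M) (a b : α) :
    p⁻¹ • q • a = r • b ↔ (q⁻¹ * p * r)⁻¹ • a = b := by
  rw [inv_smul_eq_iff, inv_smul_eq_iff, mul_smul, mul_smul, eq_inv_smul_iff]

theorem conj_mul_of_mem_center {G : Type*} [Group G] (x : G) {t : G}
    (ht : t ∈ Subgroup.center G) : MulAut.conj (x * t) = MulAut.conj x := by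
  ext g
  rw [map_mul, MulAut.mul_apply, MulAut.conj_apply t,
    ← Subgroup.mem_center_iff.mp ht, mul_inv_cancel_right]

namespace GarsideStructure

variable {G : Type*} [Group G] {S : GarsideStructure G}

/-! ### The prefix order -/

theorem le.refl (a : G) : S.le a a := by
  simp [le, S.pos.one_mem]

theorem le.trans {a b c : G} (hab : S.le a b) (hbc : S.le b c) : S.le a c := by
  have h := S.pos.mul_mem hab hbc
  rwa [mul_assoc, mul_inv_cancel_left] at h

theorem le.antisymm {a b : G} (hab : S.le a b) (hba : S.le b a) : a = b :=
  inv_mul_eq_one.mp (S.units_triv _ hab (by rwa [mul_inv_rev, inv_inv]))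

theorem one_le_iff {a : G} : S.le 1 a ↔ a ∈ S.pos := by
  simp [le]

theorem le_mul_right (a : G) {b : G} (hb : b ∈ S.pos) : S.le a (a * b) := by
  simpa [le] using hb

theorem mul_le_iff {a b c : G} : S.le (a * b) c ↔ S.le b (a⁻¹ * c) := by
  simp [le, mul_assoc]

theorem pos_of_le {a b : G} (ha : a ∈ S.pos) (hab : S.le a b) : b ∈ S.pos :=
  one_le_iff.mp ((one_le_iff.mpr ha).trans hab)

theorem conj_inv_smul_mem_pos_iff {u y : G} :
    (MulAut.conj u)⁻¹ • y ∈ S.pos ↔ S.le u (y * u) := by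
  simp [le, MulAut.smul_def, mul_assoc]

theorem atom_le_delta {a : G} (ha : a ∈ S.atoms) : S.le a S.delta :=
  S.atoms_divide_delta a ha.1 ha.2.1 ha.2.2

variable (S) in
theorem atoms_finite : S.atoms.Finite :=
  S.divDelta_finite.subset fun _ ha => ⟨ha.1, atom_le_delta ha⟩

theorem list_prod_pos {l : List G} (hl : ∀ a ∈ l, a ∈ S.atoms) : l.prod ∈ S.pos :=
  S.pos.list_prod_mem fun a ha => (hl a ha).1

theorem exists_atom_list {g : G} (hg : g ∈ S.pos) :
    ∃ l : List G, (∀ a ∈ l, a ∈ S.atoms) ∧ l.prod = g :=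
  Submonoid.exists_list_of_mem_closure (S.atoms_generate.symm ▸ hg)

theorem exists_atom_le {g : G} (hg : g ∈ S.pos) (hne : g ≠ 1) : ∃ a ∈ S.atoms, S.le a g := by
  obtain ⟨_ | ⟨a, l⟩, hl, rfl⟩ := exists_atom_list hg
  · exact absurd List.prod_nil hne
  · rw [List.forall_mem_cons] at hl
    rw [List.prod_cons]
    exact ⟨a, hl.1, le_mul_right a (list_prod_pos hl.2)⟩

theorem eq_nil_of_prod_eq_one {l : List G} (hl : ∀ a ∈ l, a ∈ S.atoms) (h : l.prod = 1) :
    l = [] := by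
  cases l with
  | nil => rfl
  | cons a l =>
    rw [List.forall_mem_cons] at hl
    rw [List.prod_cons] at h
    have ha : a⁻¹ ∈ S.pos := inv_eq_of_mul_eq_one_right h ▸ list_prod_pos hl.2
    exact absurd (S.units_triv a hl.1.1 ha) hl.1.2.1

/-! ### Finiteness of the set of prefixes -/

theorem delta_pow_mul_mul_inv_mem_pos_iff (n : ℕ) {a : G} :
    S.delta ^ n * a * (S.delta ^ n)⁻¹ ∈ S.pos ↔ a ∈ S.pos := by
  induction n with
  | zero => simp
  | succ n ih =>
    rw [← ih, S.conj_delta (S.delta ^ n * a * (S.delta ^ n)⁻¹), pow_succ']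
    simp only [mul_inv_rev, mul_assoc]

theorem le_meet_delta_mul_delta_pow {a : G} {n : ℕ} (ha : S.le a (S.delta ^ (n + 1))) :
    S.le a (S.meet a S.delta * S.delta ^ n) := by
  have hle : S.le (a * (S.delta ^ n)⁻¹) (S.meet a S.delta) := by
    refine S.le_meet _ _ _ ?_ ?_
    · simpa using S.pos.pow_mem S.delta_pos n
    · rw [le, ← delta_pow_mul_mul_inv_mem_pos_iff n, pow_succ'] at ha
      simpa [mul_assoc] using ha
  rw [le, ← delta_pow_mul_mul_inv_mem_pos_iff n]
  simpa [le, mul_assoc] using hle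

theorem Div_delta_pow_finite (n : ℕ) : (S.Div (S.delta ^ n)).Finite := by
  induction n with
  | zero =>
    refine (Set.finite_singleton 1).subset fun a ha => ?_
    exact le.antisymm (S := S) (by simpa using ha.2) (one_le_iff.mpr ha.1)
  | succ n ih =>
    refine (S.divDelta_finite.mul ih).subset fun a ha => ?_
    refine ⟨S.meet a S.delta, ⟨?_, S.meet_le_right _ _⟩, (S.meet a S.delta)⁻¹ * a,
      ⟨S.meet_le_left _ _, ?_⟩, mul_inv_cancel_left _ _⟩
    · exact one_le_iff.mp (S.le_meet _ _ _ (one_le_iff.mpr ha.1) (one_le_iff.mpr S.delta_pos))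
    · simpa [le, mul_assoc] using le_meet_delta_mul_delta_pow ha.2

variable (S) in
theorem Div_finite (g : G) : (S.Div g).Finite := by
  obtain ⟨-, q, -, -, hq⟩ := S.delta_bounds g
  have hqn : S.le (S.delta ^ q) (S.delta ^ q.toNat) := by
    obtain ⟨m, hm⟩ := Int.eq_ofNat_of_zero_le (sub_nonneg.mpr q.self_le_toNat)
    rw [le, ← zpow_natCast S.delta q.toNat, ← zpow_neg, ← zpow_add, neg_add_eq_sub, hm,
      zpow_natCast]
    exact S.pos.pow_mem S.delta_pos m
  exact (Div_delta_pow_finite q.toNat).subset fun a ha => ⟨ha.1, (ha.2.trans hq).trans hqn⟩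

theorem ncard_Div_inv_mul_lt {r α : G} (hr : r ∈ S.pos) (hr1 : r ≠ 1) (hrα : S.le r α) :
    (S.Div (r⁻¹ * α)).ncard < (S.Div α).ncard := by
  rw [← Set.ncard_image_of_injective _ (mul_right_injective r)]
  refine Set.ncard_lt_ncard ⟨?_, fun hsub => ?_⟩ (S.Div_finite α)
  · rintro _ ⟨s, ⟨hs, hsα⟩, rfl⟩
    exact ⟨S.pos.mul_mem hr hs, mul_le_iff.mpr hsα⟩
  · obtain ⟨s, ⟨hs, -⟩, hrs⟩ := hsub ⟨S.pos.one_mem, one_le_iff.mpr (pos_of_le hr hrα)⟩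
    exact hr1 (S.units_triv r hr (inv_eq_of_mul_eq_one_right hrs ▸ hs))

theorem eq_one_of_forall_pow_le {w u : G} (hw : w ∈ S.pos) (hle : ∀ n : ℕ, S.le (w ^ n) u) :
    w = 1 := by
  have hfin : IsOfFinOrder w := by
    rw [← Classical.not_not (a := IsOfFinOrder w), ← injective_pow_iff_not_isOfFinOrder]
    exact fun hinj => Set.infinite_range_of_injective hinj <| (S.Div_finite u).subset <|
      Set.range_subset_iff.mpr fun n => ⟨S.pos.pow_mem hw n, hle n⟩
  obtain ⟨n, hn⟩ := hfin.mem_powers_iff_mem_zpowers.mpr (inv_mem (Subgroup.mem_zpowers w))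
  exact S.units_triv w hw (hn ▸ S.pos.pow_mem hw n)

variable (S) in
theorem exists_mem_center_mul_pos (x : G) : ∃ t ∈ Subgroup.center G, x * t ∈ S.pos := by
  obtain ⟨n, hn, hc⟩ := S.central_power
  obtain ⟨p, -, -, hp, -⟩ := S.delta_bounds x
  have ht : S.delta ^ (n * p.natAbs) ∈ Subgroup.center G := by
    rw [pow_mul]
    exact pow_mem hc _
  obtain ⟨m, hm⟩ : ∃ m : ℕ, p + (n * p.natAbs : ℕ) = m := Int.eq_ofNat_of_zero_le <| by
    have h := Nat.le_mul_of_pos_left p.natAbs hn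
    omega
  refine ⟨_, ht, ?_⟩
  have heq : x * S.delta ^ (n * p.natAbs) = S.delta ^ m * ((S.delta ^ p)⁻¹ * x) := by
    rw [Subgroup.mem_center_iff.mp ht x, ← zpow_natCast S.delta m, ← hm, add_comm, zpow_add,
      zpow_natCast, mul_assoc, mul_inv_cancel_left]
  exact heq ▸ S.pos.mul_mem (S.pos.pow_mem S.delta_pos m) hp

variable (S) in
theorem exists_pos_conj_eq (x : G) : ∃ u ∈ S.pos, MulAut.conj u = MulAut.conj x :=
  let ⟨t, ht, hxt⟩ := S.exists_mem_center_mul_pos x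
  ⟨x * t, hxt, conj_mul_of_mem_center x ht⟩

/-! ### The elements `Δ_X` -/

theorem exists_isLeast_upper_bound {X : Set G} (hX : X.Finite) (hne : X.Nonempty) :
    ∃ d : G, (∀ x ∈ X, S.le x d) ∧ ∀ c : G, (∀ x ∈ X, S.le x c) → S.le d c := by
  induction X, hX using Set.Finite.induction_on with
  | empty => exact absurd hne Set.not_nonempty_empty
  | @insert a X _ _ ih =>
    rcases X.eq_empty_or_nonempty with rfl | hXne
    · exact ⟨a, by simp [le.refl], by simp⟩
    · obtain ⟨d, hd, hleast⟩ := ih hXne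
      simp only [Set.forall_mem_insert]
      exact ⟨S.join a d,
        ⟨S.le_join_left _ _, fun x hx => (hd x hx).trans (S.le_join_right _ _)⟩,
        fun c hc => S.join_le _ _ _ hc.1 (hleast c hc.2)⟩

theorem deltaOf_spec {X : Set G} (hX : X ⊆ S.atoms) (hne : X.Nonempty) :
    (∀ x ∈ X, S.le x (S.deltaOf X)) ∧
      ∀ c : G, (∀ x ∈ X, S.le x c) → S.le (S.deltaOf X) c := by
  have hex := exists_isLeast_upper_bound (S := S) (S.atoms_finite.subset hX) hne
  rw [deltaOf, dif_pos hex]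
  exact hex.choose_spec

variable (S) in
theorem deltaOf_empty : S.deltaOf ∅ = 1 := by
  rw [deltaOf]
  split_ifs with h
  · have hle : ∀ c, S.le h.choose c := fun c => h.choose_spec.2 c (by simp)
    have hpos : h.choose ∈ S.pos := by simpa [le] using hle (h.choose * h.choose)
    exact (hle 1).antisymm (one_le_iff.mpr hpos)
  · rfl

theorem le_deltaOf {X : Set G} (hX : X ⊆ S.atoms) {x : G} (hx : x ∈ X) :
    S.le x (S.deltaOf X) :=
  (deltaOf_spec hX ⟨x, hx⟩).1 x hx

theorem deltaOf_pos {X : Set G} (hX : X ⊆ S.atoms) : S.deltaOf X ∈ S.pos := by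
  rcases X.eq_empty_or_nonempty with rfl | ⟨x, hx⟩
  · exact S.deltaOf_empty ▸ S.pos.one_mem
  · exact pos_of_le (hX hx).1 (le_deltaOf hX hx)

theorem deltaOf_le {X : Set G} (hX : X ⊆ S.atoms) {c : G} (hc : c ∈ S.pos)
    (h : ∀ x ∈ X, S.le x c) : S.le (S.deltaOf X) c := by
  rcases X.eq_empty_or_nonempty with rfl | hne
  · exact S.deltaOf_empty ▸ one_le_iff.mpr hc
  · exact (deltaOf_spec hX hne).2 c h

theorem deltaOf_singleton {a : G} (ha : a ∈ S.atoms) : S.deltaOf {a} = a :=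
  have haS : {a} ⊆ S.atoms := Set.singleton_subset_iff.mpr ha
  (deltaOf_le haS ha.1 fun _ hx => hx ▸ le.refl _).antisymm (le_deltaOf haS rfl)

theorem deltaOf_insert_le {X : Set G} (hX : X ⊆ S.atoms) {a c : G} (ha : a ∈ S.atoms)
    (hac : S.le a c) (hXc : S.le (S.deltaOf X) c) : S.le (S.deltaOf (insert a X)) c :=
  deltaOf_le (Set.insert_subset ha hX) (pos_of_le ha.1 hac) <|
    Set.forall_mem_insert.mpr ⟨hac, fun _ hx => (le_deltaOf hX hx).trans hXc⟩

variable (S) in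
theorem closureOf_subset_atoms (X : Set G) : S.closureOf X ⊆ S.atoms :=
  Set.inter_subset_right

theorem subset_closureOf {X : Set G} (hX : X ⊆ S.atoms) : X ⊆ S.closureOf X :=
  fun _ hx => ⟨⟨(hX hx).1, le_deltaOf hX hx⟩, hX hx⟩

theorem subset_GX {X : Set G} (hX : X ⊆ S.atoms) : X ⊆ S.GX X :=
  (subset_closureOf hX).trans Subgroup.subset_closure

theorem deltaOf_le_of_subset_closureOf {X W : Set G} (hW : W ⊆ S.atoms)
    (hXW : X ⊆ S.closureOf W) : S.le (S.deltaOf X) (S.deltaOf W) :=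
  deltaOf_le (hXW.trans (S.closureOf_subset_atoms W)) (deltaOf_pos hW) fun _ hx => (hXW hx).1.2

theorem closureOf_subset_of_subset_closureOf {X W : Set G} (hW : W ⊆ S.atoms)
    (hXW : X ⊆ S.closureOf W) : S.closureOf X ⊆ S.closureOf W :=
  fun _ ha => ⟨⟨ha.1.1, ha.1.2.trans (deltaOf_le_of_subset_closureOf hW hXW)⟩, ha.2⟩

variable (S) in
/-- A saturated set of atoms. -/
def IsSaturated (X : Set G) : Prop := S.closureOf X = X

theorem IsSaturated.subset_atoms {X : Set G} (hX : S.IsSaturated X) : X ⊆ S.atoms :=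
  hX ▸ S.closureOf_subset_atoms X

theorem IsSaturated.deltaOf_insert_ne {X : Set G} (hX : S.IsSaturated X) {a : G}
    (ha : a ∈ S.atoms) (haX : a ∉ X) : S.deltaOf (insert a X) ≠ S.deltaOf X := fun h =>
  haX <| hX ▸ ⟨⟨ha.1,
    h ▸ le_deltaOf (Set.insert_subset ha hX.subset_atoms) (Set.mem_insert a X)⟩, ha⟩

/-! ### Positive elements of `G_X` -/

namespace IsLCM

theorem deltaOf_mem_Div_delta (hLCM : S.IsLCM) {X : Set G} (hX : X ⊆ S.atoms) :
    S.deltaOf X ∈ S.Div S.delta :=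
  (hLCM.div_eq X hX ▸ ⟨deltaOf_pos hX, le.refl _⟩ :
    S.deltaOf X ∈ S.Div S.delta ∩ {g : G | g ∈ S.GX X ∧ g ∈ S.pos}).1

theorem deltaOf_mem_GX (hLCM : S.IsLCM) {X : Set G} (hX : X ⊆ S.atoms) :
    S.deltaOf X ∈ S.GX X :=
  (hLCM.div_eq X hX ▸ ⟨deltaOf_pos hX, le.refl _⟩ :
    S.deltaOf X ∈ S.Div S.delta ∩ {g : G | g ∈ S.GX X ∧ g ∈ S.pos}).2.1

theorem mem_closureOf_iff (hLCM : S.IsLCM) {X : Set G} (hX : X ⊆ S.atoms) {a : G} :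
    a ∈ S.closureOf X ↔ a ∈ S.atoms ∧ a ∈ S.GX X := by
  rw [closureOf, hLCM.div_eq X hX]
  exact ⟨fun h => ⟨h.2, h.1.2.1⟩, fun h => ⟨⟨⟨h.1.1, atom_le_delta h.1⟩, h.2, h.1.1⟩, h.1⟩⟩

theorem eq_of_GX_eq (hLCM : S.IsLCM) {X Y : Set G} (hX : S.IsSaturated X) (hY : S.IsSaturated Y)
    (h : S.GX X = S.GX Y) : X = Y := by
  rw [← hX, ← hY]
  ext a
  rw [hLCM.mem_closureOf_iff hX.subset_atoms, hLCM.mem_closureOf_iff hY.subset_atoms, h]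

theorem mem_GX_of_le (hLCM : S.IsLCM) {X : Set G} (hX : X ⊆ S.atoms) {g h : G}
    (hh : h ∈ S.GX X) (hg : g ∈ S.pos) (hgh : S.le g h) : g ∈ S.GX X :=
  (hLCM.factor_closed X hX h hh (pos_of_le hg hgh) g _ hg hgh (mul_inv_cancel_left g h).symm).1

theorem deltaOf_mem_GX_of_subset_closureOf (hLCM : S.IsLCM) {X W : Set G} (hW : W ⊆ S.atoms)
    (hXW : X ⊆ S.closureOf W) : S.deltaOf X ∈ S.GX W :=
  hLCM.mem_GX_of_le hW (hLCM.deltaOf_mem_GX hW)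
    (deltaOf_pos (hXW.trans (S.closureOf_subset_atoms W))) (deltaOf_le_of_subset_closureOf hW hXW)

theorem mem_closureOf_of_mem_list (hLCM : S.IsLCM) {X : Set G} (hX : X ⊆ S.atoms) {l : List G}
    (hl : ∀ a ∈ l, a ∈ S.atoms) (hprod : l.prod ∈ S.GX X) : ∀ a ∈ l, a ∈ S.closureOf X := by
  induction l with
  | nil => simp
  | cons b l ih =>
    have hpos := list_prod_pos hl
    rw [List.forall_mem_cons] at hl ⊢
    obtain ⟨hb, hlX⟩ := hLCM.factor_closed X hX _ hprod hpos b l.prod hl.1.1 (list_prod_pos hl.2)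
      List.prod_cons
    exact ⟨(hLCM.mem_closureOf_iff hX).mpr ⟨hl.1, hb⟩, ih hl.2 hlX⟩

theorem mem_submonoid_closure_closureOf (hLCM : S.IsLCM) {X : Set G} (hX : X ⊆ S.atoms) {g : G}
    (hg : g ∈ S.GX X) (hpos : g ∈ S.pos) : g ∈ Submonoid.closure (S.closureOf X) := by
  obtain ⟨l, hl, rfl⟩ := exists_atom_list hpos
  exact list_prod_mem fun a ha =>
    Submonoid.subset_closure (hLCM.mem_closureOf_of_mem_list hX hl hg a ha)

theorem pos_of_mem_centralizer (hLCM : S.IsLCM) {Y : Set G} (hY : Y ⊆ S.atoms) {y u : G}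
    (hy : y ∈ S.GX Y) (hyc : y ∈ Subgroup.centralizer (S.GX Y))
    (hu : (MulAut.conj u)⁻¹ • y ∈ S.pos) : y ∈ S.pos := by
  obtain ⟨v, hv, hvu⟩ := S.exists_pos_conj_eq u
  rw [← hvu, conj_inv_smul_mem_pos_iff] at hu
  set w := S.join y⁻¹ 1
  have hw : w ∈ S.GX Y := (hLCM.lattice_closed Y hY _ _ (inv_mem hy) (one_mem _)).2
  have hpow : ∀ n : ℕ, S.le (w ^ n) v := by
    intro n
    induction n with
    | zero => simpa using one_le_iff.mpr hv
    | succ n ih =>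
      have hcomm := Subgroup.mem_centralizer_iff.mp (inv_mem hyc) _ (pow_mem hw n)
      rw [pow_succ, mul_le_iff]
      refine S.join_le _ _ _ ?_ (one_le_iff.mpr ih)
      rw [← le, ← mul_le_iff, hcomm, mul_le_iff, inv_inv]
      exact ih.trans hu
  have hw1 : w = 1 := eq_one_of_forall_pow_le (one_le_iff.mp (S.le_join_right y⁻¹ 1)) hpow
  simpa [w, hw1] using S.le_join_left y⁻¹ 1

/-! ### Square-freeness of simple elements -/

theorem mul_self_not_mem_Div_delta (hLCM : S.IsLCM) {a : G} (ha : a ∈ S.atoms) :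
    a * a ∉ S.Div S.delta := fun haa => by
  have haS : {a} ⊆ S.atoms := Set.singleton_subset_iff.mpr ha
  have haX : a ∈ S.GX {a} := subset_GX haS rfl
  have hmem : a * a ∈ S.Div (S.deltaOf {a}) := by
    rw [hLCM.div_eq _ haS]
    exact ⟨haa, mul_mem haX haX, haa.1⟩
  rw [deltaOf_singleton ha] at hmem
  exact ha.2.1 (S.units_triv a ha.1 (by simpa [le, mul_assoc] using hmem.2))

theorem deltaOf_mul_not_mem_Div_delta (hLCM : S.IsLCM) {X : Set G} (hX : X ⊆ S.atoms) {b : G}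
    (hb : b ∈ X) : S.deltaOf X * b ∉ S.Div S.delta := fun hmem => by
  have hbpos := (hX hb).1
  have hsuffix : S.deltaOf X * b⁻¹ ∈ S.pos := (hLCM.balanced X hX b hbpos).mp (le_deltaOf hX hb)
  -- The cofactor `t` of the simple element `Δ_X b = (Δ_X b⁻¹) b b` makes `b b t` a suffix of `Δ`.
  set t := (S.deltaOf X * b)⁻¹ * S.delta with ht
  have htpos : t ∈ S.pos := hmem.2
  have hbbt : S.le (b * b * t) S.delta := by
    refine (S.delta_balanced _ (mul_mem (mul_mem hbpos hbpos) htpos)).mpr ?_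
    rwa [show S.delta * (b * b * t)⁻¹ = S.deltaOf X * b⁻¹ by rw [ht]; group]
  exact hLCM.mul_self_not_mem_Div_delta (hX hb)
    ⟨mul_mem hbpos hbpos, (le_mul_right _ htpos).trans hbbt⟩

theorem exists_atom_le_of_le_deltaOf_mul (hLCM : S.IsLCM) {X : Set G} (hX : S.IsSaturated X)
    {β : G} (hβ : β ∈ S.pos) (h : ∃ a ∈ S.atoms \ X, S.le a (S.deltaOf X * β)) :
    ∃ b ∈ S.atoms \ X, S.le b β := by
  obtain ⟨a, ⟨ha, haX⟩, hle⟩ := h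
  have hXS := hX.subset_atoms
  have hW : insert a X ⊆ S.atoms := Set.insert_subset ha hXS
  have hXW : S.le (S.deltaOf X) (S.deltaOf (insert a X)) :=
    deltaOf_le_of_subset_closureOf hW ((Set.subset_insert a X).trans (subset_closureOf hW))
  obtain ⟨b, hb, hbW⟩ := exists_atom_le hXW fun h1 =>
    hX.deltaOf_insert_ne ha haX (inv_mul_eq_one.mp h1).symm
  have hXb : S.le (S.deltaOf X * b) (S.deltaOf (insert a X)) := mul_le_iff.mpr hbW
  refine ⟨b, ⟨hb, fun hbX => hLCM.deltaOf_mul_not_mem_Div_delta hXS hbX ⟨?_, ?_⟩⟩, ?_⟩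
  · exact mul_mem (deltaOf_pos hXS) hb.1
  · exact hXb.trans (hLCM.deltaOf_mem_Div_delta hW).2
  · simpa using mul_le_iff.mp (hXb.trans (deltaOf_insert_le hXS ha hle (le_mul_right _ hβ)))

theorem exists_atom_le_of_le_deltaOf_pow_mul (hLCM : S.IsLCM) {X : Set G} (hX : S.IsSaturated X)
    {β : G} (hβ : β ∈ S.pos) (k : ℕ) (h : ∃ a ∈ S.atoms \ X, S.le a (S.deltaOf X ^ k * β)) :
    ∃ b ∈ S.atoms \ X, S.le b β := by
  induction k with
  | zero => simpa using h
  | succ k ih =>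
    refine ih (hLCM.exists_atom_le_of_le_deltaOf_mul hX ?_ ?_)
    · exact mul_mem (S.pos.pow_mem (deltaOf_pos hX.subset_atoms) k) hβ
    · simpa only [pow_succ', mul_assoc] using h

end IsLCM

/-! ### Automorphisms preserving the positive elements of `G_W` -/

variable (S) in
/-- An automorphism of `G` which stabilises the subgroup `H` together with its positive elements,
so that it restricts to an automorphism of `H` preserving the prefix order. -/
structure PreservesPos (φ : MulAut G) (H : Subgroup G) : Prop where
  smul_eq : φ • H = H
  smul_mem_pos_iff : ∀ {g : G}, g ∈ H → (φ • g ∈ S.pos ↔ g ∈ S.pos)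

namespace PreservesPos

variable {φ : MulAut G} {H : Subgroup G} {W X : Set G}

theorem smul_mem_iff (hφ : S.PreservesPos φ H) {g : G} : φ • g ∈ H ↔ g ∈ H := by
  conv_lhs => rw [← hφ.smul_eq, Subgroup.smul_mem_pointwise_smul_iff]

theorem inv (hφ : S.PreservesPos φ H) : S.PreservesPos φ⁻¹ H where
  smul_eq := inv_smul_eq_iff.mpr hφ.smul_eq.symm
  smul_mem_pos_iff {g} hg := by
    rw [← hφ.smul_mem_pos_iff, smul_inv_smul]
    rwa [← hφ.smul_mem_iff, smul_inv_smul]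

theorem smul_le_smul_iff (hφ : S.PreservesPos φ H) {g h : G} (hg : g ∈ H) (hh : h ∈ H) :
    S.le (φ • g) (φ • h) ↔ S.le g h := by
  rw [le, ← smul_inv', ← smul_mul', hφ.smul_mem_pos_iff (mul_mem (inv_mem hg) hh), le]

theorem smul_mem_atoms (hLCM : S.IsLCM) (hW : W ⊆ S.atoms) (hφ : S.PreservesPos φ (S.GX W))
    {a : G} (haW : a ∈ S.GX W) (ha : a ∈ S.atoms) : φ • a ∈ S.atoms := by
  refine ⟨(hφ.smul_mem_pos_iff haW).mpr ha.1, (map_ne_one_iff φ φ.injective).mpr ha.2.1,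
    fun b hb hba => ?_⟩
  have hbW : b ∈ S.GX W := hLCM.mem_GX_of_le hW (hφ.smul_mem_iff.mpr haW) hb hba
  have hle : S.le (φ⁻¹ • b) a := by
    simpa using (hφ.inv.smul_le_smul_iff hbW (hφ.smul_mem_iff.mpr haW)).mpr hba
  simpa only [inv_smul_eq_iff, smul_one] using
    ha.2.2 _ ((hφ.inv.smul_mem_pos_iff hbW).mpr hb) hle

theorem smul_subset_closureOf (hLCM : S.IsLCM) (hW : W ⊆ S.atoms)
    (hφ : S.PreservesPos φ (S.GX W)) (hXW : X ⊆ S.closureOf W) : φ • X ⊆ S.closureOf W := by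
  rintro _ ⟨x, hx, rfl⟩
  obtain ⟨hxS, hxG⟩ := (hLCM.mem_closureOf_iff hW).mp (hXW hx)
  exact (hLCM.mem_closureOf_iff hW).mpr
    ⟨hφ.smul_mem_atoms hLCM hW hxG hxS, hφ.smul_mem_iff.mpr hxG⟩

theorem deltaOf_smul_le (hLCM : S.IsLCM) (hW : W ⊆ S.atoms) (hφ : S.PreservesPos φ (S.GX W))
    (hXW : X ⊆ S.closureOf W) : S.le (S.deltaOf (φ • X)) (φ • S.deltaOf X) := by
  have hX : X ⊆ S.atoms := hXW.trans (S.closureOf_subset_atoms W)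
  have hΔ := hLCM.deltaOf_mem_GX_of_subset_closureOf hW hXW
  refine deltaOf_le ((hφ.smul_subset_closureOf hLCM hW hXW).trans (S.closureOf_subset_atoms W))
    ((hφ.smul_mem_pos_iff hΔ).mpr (deltaOf_pos hX)) ?_
  rintro _ ⟨x, hx, rfl⟩
  exact (hφ.smul_le_smul_iff (Subgroup.subset_closure (hXW hx)) hΔ).mpr (le_deltaOf hX hx)

theorem deltaOf_smul (hLCM : S.IsLCM) (hW : W ⊆ S.atoms) (hφ : S.PreservesPos φ (S.GX W))
    (hXW : X ⊆ S.closureOf W) : S.deltaOf (φ • X) = φ • S.deltaOf X := by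
  have hφX := hφ.smul_subset_closureOf hLCM hW hXW
  refine (hφ.deltaOf_smul_le hLCM hW hXW).antisymm ?_
  have hle := hφ.inv.deltaOf_smul_le hLCM hW hφX
  rw [inv_smul_smul] at hle
  simpa using (hφ.smul_le_smul_iff (hLCM.deltaOf_mem_GX_of_subset_closureOf hW hXW)
    (hφ.inv.smul_mem_iff.mpr (hLCM.deltaOf_mem_GX_of_subset_closureOf hW hφX))).mpr hle

theorem smul_closureOf_subset (hLCM : S.IsLCM) (hW : W ⊆ S.atoms)
    (hφ : S.PreservesPos φ (S.GX W)) (hXW : X ⊆ S.closureOf W) :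
    φ • S.closureOf X ⊆ S.closureOf (φ • X) := by
  rintro _ ⟨a, ha, rfl⟩
  have haW : a ∈ S.GX W :=
    Subgroup.subset_closure (closureOf_subset_of_subset_closureOf hW hXW ha)
  refine ⟨⟨(hφ.smul_mem_pos_iff haW).mpr ha.1.1, ?_⟩, hφ.smul_mem_atoms hLCM hW haW ha.2⟩
  rw [hφ.deltaOf_smul hLCM hW hXW]
  exact (hφ.smul_le_smul_iff haW (hLCM.deltaOf_mem_GX_of_subset_closureOf hW hXW)).mpr ha.1.2

theorem closureOf_smul (hLCM : S.IsLCM) (hW : W ⊆ S.atoms) (hφ : S.PreservesPos φ (S.GX W))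
    (hXW : X ⊆ S.closureOf W) : S.closureOf (φ • X) = φ • S.closureOf X := by
  refine Set.Subset.antisymm ?_ (hφ.smul_closureOf_subset hLCM hW hXW)
  have h := hφ.inv.smul_closureOf_subset hLCM hW (hφ.smul_subset_closureOf hLCM hW hXW)
  rwa [inv_smul_smul, Set.smul_set_subset_iff_subset_inv_smul_set, inv_inv] at h

theorem GX_smul (hLCM : S.IsLCM) (hW : W ⊆ S.atoms) (hφ : S.PreservesPos φ (S.GX W))
    (hXW : X ⊆ S.closureOf W) : S.GX (φ • X) = φ • S.GX X := by
  rw [GX, GX, hφ.closureOf_smul hLCM hW hXW, Subgroup.smul_closure]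

end PreservesPos

namespace IsLCM

theorem conj_deltaOf_smul_mem_pos (hLCM : S.IsLCM) {X : Set G} (hX : X ⊆ S.atoms) {g : G}
    (hg : g ∈ S.GX X) (hpos : g ∈ S.pos) : MulAut.conj (S.deltaOf X) • g ∈ S.pos := by
  refine Submonoid.closure_le (S := S.pos.comap (MulAut.conj (S.deltaOf X)).toMonoidHom).mpr
    (fun a ha => ?_) (hLCM.mem_submonoid_closure_closureOf hX hg hpos)
  have hsuffix : S.deltaOf X * a⁻¹ ∈ S.pos := (hLCM.balanced X hX _ ha.1.1).mp ha.1.2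
  have h := (hLCM.balanced X hX _ hsuffix).mp (by simpa [le] using ha.1.1)
  simpa [mul_assoc] using h

theorem conj_deltaOf_inv_smul_mem_pos (hLCM : S.IsLCM) {X : Set G} (hX : X ⊆ S.atoms) {g : G}
    (hg : g ∈ S.GX X) (hpos : g ∈ S.pos) : (MulAut.conj (S.deltaOf X))⁻¹ • g ∈ S.pos := by
  refine Submonoid.closure_le (S := S.pos.comap (MulAut.conj (S.deltaOf X))⁻¹.toMonoidHom).mpr
    (fun a ha => ?_) (hLCM.mem_submonoid_closure_closureOf hX hg hpos)
  have h : S.le (a⁻¹ * S.deltaOf X) (S.deltaOf X) :=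
    (hLCM.balanced X hX _ ha.1.2).mpr (by simpa using ha.1.1)
  simpa [le, mul_assoc] using h

theorem preservesPos_conj_deltaOf_inv (hLCM : S.IsLCM) {X : Set G} (hX : X ⊆ S.atoms) :
    S.PreservesPos (MulAut.conj (S.deltaOf X))⁻¹ (S.GX X) := by
  have heq : (MulAut.conj (S.deltaOf X))⁻¹ • S.GX X = S.GX X :=
    inv_smul_eq_iff.mpr (Subgroup.conj_smul_eq_self_of_mem (hLCM.deltaOf_mem_GX hX)).symm
  refine ⟨heq, fun {g} hg => ⟨fun hpos => ?_, hLCM.conj_deltaOf_inv_smul_mem_pos hX hg⟩⟩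
  have hmem : (MulAut.conj (S.deltaOf X))⁻¹ • g ∈ S.GX X :=
    heq ▸ Subgroup.smul_mem_pointwise_smul g _ _ hg
  have h := hLCM.conj_deltaOf_smul_mem_pos hX hmem hpos
  rwa [smul_inv_smul] at h

/-! ### Conjugators between standard parabolic subgroups -/

theorem exists_isSaturated_ribbon (hLCM : S.IsLCM) {X : Set G} (hX : S.IsSaturated X) {a : G}
    (ha : a ∈ S.atoms) :
    ∃ X', S.IsSaturated X' ∧
      S.GX X' = (MulAut.conj ((S.deltaOf X)⁻¹ * S.deltaOf (insert a X)))⁻¹ • S.GX X ∧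
      S.deltaOf X' = (MulAut.conj ((S.deltaOf X)⁻¹ * S.deltaOf (insert a X)))⁻¹ • S.deltaOf X := by
  have hW : insert a X ⊆ S.atoms := Set.insert_subset ha hX.subset_atoms
  have hXW : X ⊆ S.closureOf (insert a X) := (Set.subset_insert a X).trans (subset_closureOf hW)
  have hφ := hLCM.preservesPos_conj_deltaOf_inv hW
  refine ⟨(MulAut.conj (S.deltaOf (insert a X)))⁻¹ • X, ?_, ?_, ?_⟩
  · rw [IsSaturated, hφ.closureOf_smul hLCM hW hXW, hX]
  · rw [hφ.GX_smul hLCM hW hXW, map_mul, map_inv, mul_inv_rev, inv_inv, mul_smul,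
      Subgroup.conj_smul_eq_self_of_mem (hLCM.deltaOf_mem_GX hX.subset_atoms)]
  · rw [hφ.deltaOf_smul hLCM hW hXW, map_mul, map_inv, mul_inv_rev, inv_inv, mul_smul]
    simp [MulAut.smul_def]

theorem exists_prefix_conj_isSaturated (hLCM : S.IsLCM) {X : Set G} (hX : S.IsSaturated X) {k : ℕ}
    (hcent : S.deltaOf X ^ (k + 1) ∈ Subgroup.centralizer (S.GX X)) {α : G} (hα : α ∈ S.pos)
    (hα1 : α ≠ 1) (hle : S.le α (S.deltaOf X ^ (k + 1) * α)) :
    ∃ r ∈ S.pos, r ≠ 1 ∧ S.le r α ∧ ∃ X', S.IsSaturated X' ∧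
      S.GX X' = (MulAut.conj r)⁻¹ • S.GX X ∧
      S.deltaOf X' ^ (k + 1) = (MulAut.conj r)⁻¹ • S.deltaOf X ^ (k + 1) := by
  have hXS := hX.subset_atoms
  obtain ⟨a₀, ha₀, ha₀α⟩ := exists_atom_le hα hα1
  by_cases ha₀X : a₀ ∈ X
  · have ha₀G : a₀ ∈ S.GX X := subset_GX hXS ha₀X
    refine ⟨a₀, ha₀.1, ha₀.2.1, ha₀α, X, hX, ?_, ?_⟩
    · rw [eq_inv_smul_iff, Subgroup.conj_smul_eq_self_of_mem ha₀G]
    · rw [eq_inv_smul_iff, MulAut.smul_def, MulAut.conj_apply,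
        Subgroup.mem_centralizer_iff.mp hcent a₀ ha₀G, mul_inv_cancel_right]
  · obtain ⟨a, ⟨ha, haX⟩, haα⟩ : ∃ a ∈ S.atoms \ X, S.le a (S.deltaOf X * α) := by
      refine hLCM.exists_atom_le_of_le_deltaOf_pow_mul hX (mul_mem (deltaOf_pos hXS) hα) k
        ⟨a₀, ⟨ha₀, ha₀X⟩, ?_⟩
      rw [← mul_assoc, ← pow_succ]
      exact ha₀α.trans hle
    have hW : insert a X ⊆ S.atoms := Set.insert_subset ha hXS
    obtain ⟨X', hX', hGX', hΔX'⟩ := hLCM.exists_isSaturated_ribbon hX ha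
    refine ⟨(S.deltaOf X)⁻¹ * S.deltaOf (insert a X), ?_, ?_, ?_, X', hX', hGX', ?_⟩
    · exact deltaOf_le_of_subset_closureOf hW
        ((Set.subset_insert a X).trans (subset_closureOf hW))
    · exact fun h => hX.deltaOf_insert_ne ha haX (inv_mul_eq_one.mp h).symm
    · rw [mul_le_iff, inv_inv]
      exact deltaOf_insert_le hXS ha haα (le_mul_right _ hα)
    · rw [hΔX', smul_pow']

theorem conj_smul_deltaOf_pow_of_pos (hLCM : S.IsLCM) {X Y : Set G} (hX : S.IsSaturated X)
    (hY : S.IsSaturated Y) {k : ℕ}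
    (hcent : S.deltaOf X ^ (k + 1) ∈ Subgroup.centralizer (S.GX X)) {α : G} (hα : α ∈ S.pos)
    (hconj : (MulAut.conj α)⁻¹ • S.GX X = S.GX Y)
    (hpos : (MulAut.conj α)⁻¹ • S.deltaOf X ^ (k + 1) ∈ S.pos) :
    (MulAut.conj α)⁻¹ • S.deltaOf X ^ (k + 1) = S.deltaOf Y ^ (k + 1) := by
  induction hn : (S.Div α).ncard using Nat.strong_induction_on generalizing X α with
  | _ n ih =>
  subst hn
  by_cases hα1 : α = 1
  · subst hα1
    rw [map_one, inv_one, one_smul] at hconj ⊢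
    rw [hLCM.eq_of_GX_eq hX hY hconj]
  obtain ⟨r, hr, hr1, hrα, X', hX', hGX', hΔX'⟩ :=
    hLCM.exists_prefix_conj_isSaturated hX hcent hα hα1 (conj_inv_smul_mem_pos_iff.mp hpos)
  have hfactor : (MulAut.conj (r⁻¹ * α))⁻¹ * (MulAut.conj r)⁻¹ = (MulAut.conj α)⁻¹ := by
    rw [← mul_inv_rev, ← map_mul, mul_inv_cancel_left]
  have hz : (MulAut.conj (r⁻¹ * α))⁻¹ • S.deltaOf X' ^ (k + 1) =
      (MulAut.conj α)⁻¹ • S.deltaOf X ^ (k + 1) := by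
    rw [hΔX', smul_smul, hfactor]
  rw [← hz] at hpos ⊢
  refine ih _ (ncard_Div_inv_mul_lt hr hr1 hrα) hX' ?_ hrα ?_ hpos rfl
  · rwa [hGX', hΔX', smul_mem_centralizer_smul_iff]
  · rw [hGX', smul_smul, hfactor, hconj]

theorem conj_smul_deltaOf_pow (hLCM : S.IsLCM) {X Y : Set G} (hX : S.IsSaturated X)
    (hY : S.IsSaturated Y) {e : ℕ} (hcent : S.deltaOf X ^ e ∈ Subgroup.centralizer (S.GX X))
    {α : G} (hconj : (MulAut.conj α)⁻¹ • S.GX X = S.GX Y) :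
    (MulAut.conj α)⁻¹ • S.deltaOf X ^ e = S.deltaOf Y ^ e := by
  obtain _ | k := e
  · simp
  obtain ⟨u, hu, huα⟩ := S.exists_pos_conj_eq α
  rw [← huα] at hconj ⊢
  refine hLCM.conj_smul_deltaOf_pow_of_pos hX hY hcent hu hconj ?_
  refine hLCM.pos_of_mem_centralizer (u := u⁻¹) hY.subset_atoms ?_ ?_ ?_
  · rw [← hconj, Subgroup.smul_mem_pointwise_smul_iff]
    exact pow_mem (hLCM.deltaOf_mem_GX hX.subset_atoms) _
  · rwa [← hconj, smul_mem_centralizer_smul_iff]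
  · rw [map_inv, inv_inv, smul_inv_smul]
    exact S.pos.pow_mem (deltaOf_pos hX.subset_atoms) _

end IsLCM

variable (S) in
/-- The positive exponents `e` such that `(Δ_X)^e` is central in `G_X`. -/
def centralExponents (X : Set G) : Set ℕ :=
  {e | 0 < e ∧ S.deltaOf X ^ e ∈ Subgroup.centralizer (S.GX X)}

theorem IsLCM.centralExponents_subset (hLCM : S.IsLCM) {X Y : Set G} (hX : S.IsSaturated X)
    (hY : S.IsSaturated Y) {α : G} (hconj : (MulAut.conj α)⁻¹ • S.GX X = S.GX Y) :
    S.centralExponents X ⊆ S.centralExponents Y := fun e he => by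
  refine ⟨he.1, ?_⟩
  rw [← hLCM.conj_smul_deltaOf_pow hX hY he.2 hconj, ← hconj, smul_mem_centralizer_smul_iff]
  exact he.2

theorem IsLCM.centralExponents_eq (hLCM : S.IsLCM) {X Y : Set G} (hX : S.IsSaturated X)
    (hY : S.IsSaturated Y) {α : G} (hconj : (MulAut.conj α)⁻¹ • S.GX X = S.GX Y) :
    S.centralExponents X = S.centralExponents Y := by
  refine (hLCM.centralExponents_subset hX hY hconj).antisymm
    (hLCM.centralExponents_subset (α := α⁻¹) hY hX ?_)
  rw [map_inv, inv_inv, ← hconj, smul_inv_smul]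

theorem IsZof.exists_centralExponents {B : Subgroup G} {z : G} (hz : S.IsZof B z) :
    ∃ X, S.IsSaturated X ∧ ∃ c : G, B = MulAut.conj c • S.GX X ∧
      ∃ e, IsLeast (S.centralExponents X) e ∧ z = MulAut.conj c • S.deltaOf X ^ e := by
  obtain ⟨X, -, hX, c, hB, e, he, hcomm, hmin, rfl⟩ := hz
  exact ⟨X, hX, c, hB, e, ⟨⟨he, hcomm⟩, fun e' he' => hmin e' he'.1 he'.2⟩, rfl⟩

/-! ### Supports of positive elements -/

theorem DL_of_pos {g : G} (hg : g ∈ S.pos) : S.DL g = 1 := by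
  have h : S.meet 1 g = 1 := le.antisymm (S := S) (S.meet_le_left _ _)
    (S.le_meet _ _ _ (le.refl 1) (one_le_iff.mpr hg))
  rw [DL, h, inv_one]

theorem exists_supp_eq_closureOf {g : G} (hg : g ∈ S.pos) :
    ∃ l : List G, (∀ a ∈ l, a ∈ S.atoms) ∧ l.prod = g ∧ S.supp g = S.closureOf {a | a ∈ l} := by
  have hNL : S.NL g = g := by rw [NL, DL_of_pos hg, one_mul]
  have hex : ∃ p : List G × List G, (∀ a ∈ p.1, a ∈ S.atoms) ∧ (∀ a ∈ p.2, a ∈ S.atoms) ∧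
      p.1.prod = S.DL g ∧ p.2.prod = S.NL g := by
    obtain ⟨l, hl, hprod⟩ := exists_atom_list hg
    exact ⟨([], l), by simp, hl, by simp [DL_of_pos hg], by simp [hNL, hprod]⟩
  obtain ⟨h₁, h₂, hD, hN⟩ := hex.choose_spec
  refine ⟨hex.choose.2, h₂, hN.trans hNL, ?_⟩
  rw [supp, dif_pos hex, eq_nil_of_prod_eq_one h₁ (hD.trans (DL_of_pos hg))]
  simp

theorem IsLCM.supp_subset_closureOf (hLCM : S.IsLCM) {X : Set G} (hX : X ⊆ S.atoms) {g : G}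
    (hg : g ∈ S.pos) (hgX : g ∈ S.GX X) : S.supp g ⊆ S.closureOf X := by
  obtain ⟨l, hl, rfl, hsupp⟩ := exists_supp_eq_closureOf hg
  rw [hsupp]
  exact closureOf_subset_of_subset_closureOf hX (hLCM.mem_closureOf_of_mem_list hX hl hgX)

theorem IsLCM.mem_supp_of_atom_le (hLCM : S.IsLCM) {a g : G} (ha : a ∈ S.atoms)
    (hag : S.le a g) : a ∈ S.supp g := by
  obtain ⟨l, hl, rfl, hsupp⟩ := exists_supp_eq_closureOf (pos_of_le ha.1 hag)
  rw [hsupp, hLCM.mem_closureOf_iff (X := {b | b ∈ l}) hl]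
  exact ⟨ha, hLCM.mem_GX_of_le hl (list_prod_mem fun b hb => subset_GX hl hb) ha.1 hag⟩

theorem IsLCM.supp_deltaOf_pow (hLCM : S.IsLCM) {X : Set G} (hX : S.IsSaturated X) {e : ℕ}
    (he : 0 < e) : S.supp (S.deltaOf X ^ e) = X := by
  have hXS := hX.subset_atoms
  have hpow := fun n => S.pos.pow_mem (deltaOf_pos hXS) n
  refine Set.Subset.antisymm ?_ fun x hx => hLCM.mem_supp_of_atom_le (hXS hx) ?_
  · conv_rhs => rw [← hX]
    exact hLCM.supp_subset_closureOf hXS (hpow e) (pow_mem (hLCM.deltaOf_mem_GX hXS) e)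
  · rw [← Nat.sub_one_add_one he.ne', pow_succ']
    exact (le_deltaOf hXS hx).trans (le_mul_right _ (hpow _))

theorem SupportPreserving.conj_smul_GX_eq (hsp : S.SupportPreserving) (hLCM : S.IsLCM)
    {X Y : Set G} (hX : S.IsSaturated X) (hY : S.IsSaturated Y) {e f : ℕ} (he : 0 < e)
    (hf : 0 < f) {α : G} (h : (MulAut.conj α)⁻¹ • S.deltaOf X ^ e = S.deltaOf Y ^ f) :
    (MulAut.conj α)⁻¹ • S.GX X = S.GX Y := by
  have hG := hsp _ (S.pos.pow_mem (deltaOf_pos hX.subset_atoms) e) _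
    (S.pos.pow_mem (deltaOf_pos hY.subset_atoms) f) α (by
      rw [← h, MulAut.smul_def, MulAut.conj_inv_apply])
  rw [hLCM.supp_deltaOf_pow hX he, hLCM.supp_deltaOf_pow hY hf, map_inv] at hG
  exact hG

theorem IsLCM.conj_smul_GX_eq_iff (hLCM : S.IsLCM) (hsp : S.SupportPreserving) {X Y : Set G}
    (hX : S.IsSaturated X) (hY : S.IsSaturated Y) {e f : ℕ}
    (he : IsLeast (S.centralExponents X) e) (hf : IsLeast (S.centralExponents Y) f) {α : G} :
    (MulAut.conj α)⁻¹ • S.GX X = S.GX Y ↔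
      (MulAut.conj α)⁻¹ • S.deltaOf X ^ e = S.deltaOf Y ^ f := by
  refine ⟨fun h => ?_, hsp.conj_smul_GX_eq hLCM hX hY he.1.1 hf.1.1⟩
  rw [hLCM.conj_smul_deltaOf_pow hX hY he.1.2 h, he.unique (hLCM.centralExponents_eq hX hY h ▸ hf)]

end GarsideStructure

theorem garside_conjugate_parabolic_iff_conjugate_z_general {G : Type*} [Group G]
    (S : GarsideStructure G) (hLCM : S.IsLCM) (hsp : S.SupportPreserving)
    (B₁ B₂ : Subgroup G) (z₁ z₂ : G) (hz₁ : S.IsZof B₁ z₁) (hz₂ : S.IsZof B₂ z₂) (c : G) :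
    Subgroup.map (MulAut.conj c⁻¹).toMonoidHom B₁ = B₂ ↔ c⁻¹ * z₁ * c = z₂ := by
  obtain ⟨X, hX, c₁, rfl, e, he, rfl⟩ := hz₁.exists_centralExponents
  obtain ⟨Y, hY, c₂, rfl, f, hf, rfl⟩ := hz₂.exists_centralExponents
  have hα : (MulAut.conj c₁)⁻¹ * MulAut.conj c * MulAut.conj c₂ =
      MulAut.conj (c₁⁻¹ * c * c₂) := by
    rw [map_mul, map_mul, map_inv]
  have hsubgroup := inv_smul_smul_eq_smul_iff (MulAut.conj c) (MulAut.conj c₁) (MulAut.conj c₂)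
    (S.GX X) (S.GX Y)
  have helement := inv_smul_smul_eq_smul_iff (MulAut.conj c) (MulAut.conj c₁) (MulAut.conj c₂)
    (S.deltaOf X ^ e) (S.deltaOf Y ^ f)
  rw [hα] at hsubgroup helement
  rw [← MulAut.conj_inv_apply, ← MulAut.smul_def, helement,
    ← hLCM.conj_smul_GX_eq_iff hsp hX hY he hf, ← hsubgroup, map_inv]
  rfl

/-- two parabolic subgroups are conjugate by `c` if and only if their
canonical central elements are conjugate by `c`. -/
theorem garside_conjugate_parabolic_iff_conjugate_z {G : Type*} [Group G]
    (S : GarsideStructure G) (hLCM : S.IsLCM) (hsp : S.SupportPreserving)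
    (hhom : ∃ ℓ : G → ℕ,
      (∀ a ∈ S.pos, ∀ b ∈ S.pos, ℓ (a * b) = ℓ a + ℓ b) ∧ ∀ a ∈ S.atoms, ℓ a = 1)
    (hsf : ∀ s ∈ S.Div S.delta, ∀ u ∈ S.pos, ∀ v ∈ S.pos, ∀ a ∈ S.atoms,
      s ≠ u * a * a * v)
    (hcent : ∀ X : Set G, X ⊆ S.atoms → S.closureOf X = X →
      ∃ e : ℕ, 0 < e ∧ ∀ g ∈ S.GX X, Commute g (S.deltaOf X ^ e))
    (B₁ B₂ : Subgroup G) (h₁ : S.IsParabolic B₁) (h₂ : S.IsParabolic B₂)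
    (z₁ z₂ : G) (hz₁ : S.IsZof B₁ z₁) (hz₂ : S.IsZof B₂ z₂) (c : G) :
    Subgroup.map (MulAut.conj c⁻¹).toMonoidHom B₁ = B₂ ↔ c⁻¹ * z₁ * c = z₂ :=
  garside_conjugate_parabolic_iff_conjugate_z_general S hLCM hsp B₁ B₂ z₁ z₂ hz₁ hz₂ c
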